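/- Let ⟨G, Eℓ⟩ be a two-player game graph with live edges and let R = {(G_1, R_1), …, (G_k, R_k)} be a Rabin condition with index set P = {1, …, k}. With p_0 := 0, G_{p_0} := ∅ and R_{p_0} := ∅, define Z* := νY_{p_0}. μX_{p_0}. ⋃_{p_1 ∈ P} νY_{p_1}. μX_{p_1}. ⋃_{p_2 ∈ P∖{p_1}} νY_{p_2}. μX_{p_2}. ⋯ ⋃_{p_k ∈ P∖{p_1,…,p_{k−1}}} νY_{p_k}. μX_{p_k}. ⋃_{j=0}^{k} C_{p_j}, where C_{p_j} := ( ⋂_{i=0}^{j} (V ∖ R_{p_i}) ) ∩ [ (G_{p_j} ∩ Cpre(Y_{p_j})) ∪ Apre(Y_{p_j}, X_{p_j}) ] (the innermost body along a branch of permutation choices p_1 … p_k depends on all bound variables Y_{p_0}, X_{p_0}, …, Y_{p_k}, X_{p_k}). Then Z* equals the winning region W of Player 0 in the fair adversarial game over ⟨G, Eℓ⟩ for the Rabin winning condition φ = ⋁_{j∈P} ( ◇□(V∖R_j) ∧ □◇G_j ). Moreover, there exists a memoryless Player-0 strategy that wins the fair adversarial game for φ from every vertex of Z*. -/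

import Mathlib

/-- Least fixed point of a set transformer (Knaster–Tarski form). -/
def lfpSet {V : Type*} (f : Set V → Set V) : Set V := sInf {X | f X ⊆ X}

/-- Greatest fixed point of a set transformer (Knaster–Tarski form). -/
def gfpSet {V : Type*} (f : Set V → Set V) : Set V := sSup {X | X ⊆ f X}

/-- A two-player game graph with live edges: vertices are partitioned into
Player-0 vertices `V0` and Player-1 vertices `V1`, every vertex has a successor,
and live edges `El` are Player-1 edges. -/
structure LiveGameGraph (V : Type*) where
  V0 : Set V
  V1 : Set V
  E : V → V → Prop
  El : V → V → Prop
  cover : V0 ∪ V1 = Set.univ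
  disj : V0 ∩ V1 = ∅
  succ_nonempty : ∀ v : V, ∃ w, E v w
  live_sub : ∀ v w, El v w → v ∈ V1 ∧ E v w

namespace LiveGameGraph

variable {V : Type*}

/-- Pre∃0(S) -/
def pre0 (Gm : LiveGameGraph V) (S : Set V) : Set V :=
  {v | v ∈ Gm.V0 ∧ ∃ w, Gm.E v w ∧ w ∈ S}

/-- Pre∀1(S) -/
def pre1 (Gm : LiveGameGraph V) (S : Set V) : Set V :=
  {v | v ∈ Gm.V1 ∧ ∀ w, Gm.E v w → w ∈ S}

/-- Cpre(S) -/
def cpre (Gm : LiveGameGraph V) (S : Set V) : Set V := Gm.pre0 S ∪ Gm.pre1 S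

/-- Lpre∃(T) -/
def lpre (Gm : LiveGameGraph V) (T : Set V) : Set V :=
  {v | ∃ w, Gm.El v w ∧ w ∈ T}

/-- Apre(S,T) -/
def apre (Gm : LiveGameGraph V) (S T : Set V) : Set V :=
  Gm.cpre T ∪ (Gm.lpre T ∩ Gm.pre1 S)

end LiveGameGraph

namespace LiveGameGraph

variable {V : Type*}

/-- A play is strongly transition fair if every live edge whose source is visited
infinitely often is itself taken infinitely often. -/
def StronglyFair (Gm : LiveGameGraph V) (π : ℕ → V) : Prop :=
  ∀ v w, Gm.El v w → {i | π i = v}.Infinite → {i | π i = v ∧ π (i + 1) = w}.Infinite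

/-- A Player-0 strategy: given the history (the prefix before the current vertex)
and the current vertex, it chooses an `E`-successor whenever the current vertex
belongs to Player 0. -/
def Strategy0 (Gm : LiveGameGraph V) (ρ : List V → V → V) : Prop :=
  ∀ h v, v ∈ Gm.V0 → Gm.E v (ρ h v)

/-- A Player-1 strategy. -/
def Strategy1 (Gm : LiveGameGraph V) (ρ : List V → V → V) : Prop :=
  ∀ h v, v ∈ Gm.V1 → Gm.E v (ρ h v)

/-- The play compliant with the strategies `ρ0` and `ρ1` starting at `v0`. -/
def Compliant (Gm : LiveGameGraph V) (ρ0 ρ1 : List V → V → V) (v0 : V)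
    (π : ℕ → V) : Prop :=
  π 0 = v0 ∧ ∀ i : ℕ,
    (π i ∈ Gm.V0 → π (i + 1) = ρ0 (List.ofFn fun j : Fin i => π j.1) (π i)) ∧
    (π i ∈ Gm.V1 → π (i + 1) = ρ1 (List.ofFn fun j : Fin i => π j.1) (π i))

/-- Player 0 wins the fair adversarial game for the winning condition `φ`
from `v0` using the strategy `ρ0`. -/
def WinsFrom (Gm : LiveGameGraph V) (φ : (ℕ → V) → Prop)
    (ρ0 : List V → V → V) (v0 : V) : Prop :=
  Gm.Strategy0 ρ0 ∧ ∀ ρ1, Gm.Strategy1 ρ1 → ∀ π, Gm.Compliant ρ0 ρ1 v0 π →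
    (Gm.StronglyFair π → φ π)

/-- The winning region of Player 0 in the fair adversarial game for `φ`. -/
def WinningRegion (Gm : LiveGameGraph V) (φ : (ℕ → V) → Prop) : Set V :=
  {v0 | ∃ ρ0, Gm.WinsFrom φ ρ0 v0}

end LiveGameGraph

namespace LiveGameGraph

variable {V : Type*}

/-- The nested permutation-based Rabin fixpoint, recursively peeling off one
permutation index at a time.  `avail` is the set of still-unchosen pair indices,
`Qcur` is the intersection ⋂ R̄ over the already-chosen prefix, and `acc` is the
union of the `C` terms of the already-chosen prefix (with their bound `Y`/`X`
values substituted in). -/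
def rabinAux (Gm : LiveGameGraph V) (Gp Rp : ℕ → Set V) :
    ℕ → Finset ℕ → Set V → Set V → Set V
  | 0, _, _, acc => acc
  | n + 1, avail, Qcur, acc =>
      ⋃ p ∈ avail,
        gfpSet fun Y => lfpSet fun X =>
          Gm.rabinAux Gp Rp n (avail.erase p) (Qcur ∩ (Rp p)ᶜ)
            (acc ∪ ((Qcur ∩ (Rp p)ᶜ) ∩ ((Gp p ∩ Gm.cpre Y) ∪ Gm.apre Y X)))

/-- The full permutation-based Rabin fixpoint Z* for pairs (G_1,R_1),…,(G_k,R_k),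
with the artificial pair p_0 = 0, G_0 = ∅, R_0 = ∅ handled by the outermost
νY_0. μX_0. -/
def rabinZ (Gm : LiveGameGraph V) (Gp Rp : ℕ → Set V) (k : ℕ) : Set V :=
  gfpSet fun Y0 => lfpSet fun X0 =>
    Gm.rabinAux Gp Rp k (Finset.Icc 1 k) ((∅ : Set V)ᶜ)
      (((∅ : Set V)ᶜ) ∩ (((∅ : Set V) ∩ Gm.cpre Y0) ∪ Gm.apre Y0 X0))

end LiveGameGraph

/-!
Soundness: Player 0 ranks the vertices of a least fixpoint by the stage at which they enter its
iteration, and the vertices of a union over pairs by the first pair that covers them. Playing for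
the smallest rank is positional. A vertex that a fair play visits infinitely often and that has
minimal rank cannot promise a smaller one, because fairness would make the play take the promised
move. So the ranks stabilize, and the play finally stays at one level of the fixpoint, avoiding
`R_p` and visiting `G_p` infinitely often for the pair `p` of that level.

Completeness: let `W` be the region where Player 0 wins an objective that includes the pairs still
available, and let `X` be the least fixpoint computed with `Y = W`. Suppose that `ρ` wins from a
vertex of `W \ X`. Against `ρ`, Player 1 can avoid `X` forever while taking any live edge, and for
every available pair `q` he can, from every point on, force a visit to `R_q`: otherwise `ρ` would
win the objective with `q` as the next pair of the nesting, whose region lies in `X` by induction.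
A generic play (Rasiowa–Sikorski) meets all these countably many demands infinitely often; it is
fair and follows `ρ`, but it loses.
-/

section Fixpoints

variable {α : Type*} {f g : Set α → Set α}

theorem lfpSet_mono (h : ∀ X, f X ⊆ g X) : lfpSet f ⊆ lfpSet g :=
  sInf_le_sInf fun X hX => (h X).trans hX

theorem gfpSet_mono (h : ∀ X, f X ⊆ g X) : gfpSet f ⊆ gfpSet g :=
  sSup_le_sSup fun X hX => hX.trans (h X)

theorem subset_gfpSet {X : Set α} (h : X ⊆ f X) : X ⊆ gfpSet f :=
  le_sSup h

theorem map_lfpSet (hf : Monotone f) : f (lfpSet f) = lfpSet f :=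
  OrderHom.map_lfp ⟨f, hf⟩

theorem map_gfpSet (hf : Monotone f) : f (gfpSet f) = gfpSet f :=
  OrderHom.map_gfp ⟨f, hf⟩

theorem lfpSet_eq_iUnion_iterate [Finite α] (hf : Monotone f) :
    lfpSet f = ⋃ n, f^[n] ∅ := by
  have hmono : Monotone fun n => f^[n] ∅ := hf.monotone_iterate_of_le_map (Set.empty_subset _)
  obtain ⟨n, hn⟩ := WellFoundedGT.monotone_chain_condition ⟨_, hmono⟩
  have hfix : f (f^[n] ∅) = f^[n] ∅ := by
    exact (Function.iterate_succ_apply' f n ∅).symm.trans (hn (n + 1) n.le_succ).symm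
  apply Set.Subset.antisymm
  · exact Set.subset_iUnion_of_subset n (sInf_le hfix.subset)
  · refine Set.iUnion_subset fun m => ?_
    induction m with
    | zero => exact Set.empty_subset _
    | succ m ih =>
      rw [Function.iterate_succ_apply', ← map_lfpSet hf]
      exact hf ih

end Fixpoints

section FiniteRuns

variable {α : Type*}

/-- The word `π 0, …, π (n - 1)`. -/
def initialSegment (π : ℕ → α) (n : ℕ) : List α :=
  List.ofFn fun j : Fin n => π j

@[simp]
theorem initialSegment_zero (π : ℕ → α) : initialSegment π 0 = [] :=
  List.ofFn_zero

theorem initialSegment_succ (π : ℕ → α) (n : ℕ) :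
    initialSegment π (n + 1) = initialSegment π n ++ [π n] :=
  List.ofFn_succ_last

@[simp]
theorem length_initialSegment (π : ℕ → α) (n : ℕ) : (initialSegment π n).length = n :=
  List.length_ofFn

theorem exists_of_initialSegment_eq_concat {π : ℕ → α} {n : ℕ} {u : List α} {v : α}
    (h : initialSegment π n = u ++ [v]) : ∃ m, n = m + 1 ∧ initialSegment π m = u ∧ π m = v := by
  cases n with
  | zero => simp at h
  | succ m =>
    rw [initialSegment_succ, List.append_singleton_inj] at h
    exact ⟨m, rfl, h⟩

theorem initialSegment_prefix (π : ℕ → α) {m n : ℕ} (h : m ≤ n) :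
    initialSegment π m <+: initialSegment π n := by
  induction n, h using Nat.le_induction with
  | base => exact List.prefix_refl _
  | succ n _ ih => exact ih.trans (initialSegment_succ π n ▸ List.prefix_append _ _)

theorem append_initialSegment_succ (u : List α) (π : ℕ → α) (n : ℕ) :
    u ++ initialSegment π (n + 1) = (u ++ initialSegment π n) ++ [π n] := by
  rw [initialSegment_succ, List.append_assoc]

/-- Nonempty words from `a` in a transition system whose steps may depend on the history:
`step u v w` allows the letter `w` after the word `u ++ [v]`. -/
inductive FiniteRun (step : List α → α → α → Prop) (a : α) : List α → Prop
  | singleton : FiniteRun step a [a]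
  | concat {u v w} : FiniteRun step a (u ++ [v]) → step u v w →
      FiniteRun step a (u ++ [v] ++ [w])

namespace FiniteRun

variable {step : List α → α → α → Prop} {a : α}

theorem exists_eq_concat {l : List α} (hl : FiniteRun step a l) : ∃ u v, l = u ++ [v] := by
  cases hl
  exacts [⟨[], a, rfl⟩, ⟨_, _, rfl⟩]

theorem head?_eq {l : List α} (hl : FiniteRun step a l) : l.head? = some a := by
  induction hl with
  | singleton => rfl
  | concat _ _ ih => rw [List.head?_append, ih, Option.some_or]

theorem of_prefix {l m : List α} (hl : FiniteRun step a l) (hm : m ≠ []) (h : m <+: l) :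
    FiniteRun step a m := by
  induction hl with
  | singleton =>
    rcases List.prefix_concat_iff (l₂ := []).1 h with rfl | h
    exacts [singleton, absurd (List.prefix_nil.1 h) hm]
  | concat hu hstep ih =>
    rcases List.prefix_concat_iff.1 h with rfl | h
    exacts [hu.concat hstep, ih h]

theorem step_of_concat {u : List α} {v w : α} (h : FiniteRun step a (u ++ [v] ++ [w])) :
    step u v w := by
  generalize hl : u ++ [v] ++ [w] = l at h
  cases h with
  | singleton => simp [List.append_eq_singleton_iff] at hl
  | concat _ hstep =>
    simp only [List.append_singleton_inj] at hl
    obtain ⟨⟨rfl, rfl⟩, rfl⟩ := hl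
    exact hstep

theorem of_initialSegment {π : ℕ → α}
    (hπ : ∀ i, step (initialSegment π i) (π i) (π (i + 1))) (n : ℕ) :
    FiniteRun step (π 0) (initialSegment π (n + 1)) := by
  induction n with
  | zero => exact singleton
  | succ n ih =>
    rw [initialSegment_succ] at ih ⊢
    rw [initialSegment_succ]
    exact ih.concat (hπ n)

theorem exists_length_ge (hstep : ∀ u v, FiniteRun step a (u ++ [v]) → ∃ w, step u v w)
    {l : List α} (hl : FiniteRun step a l) (n : ℕ) :
    ∃ m, FiniteRun step a m ∧ l <+: m ∧ n ≤ m.length := by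
  induction n with
  | zero => exact ⟨l, hl, List.prefix_refl l, Nat.zero_le _⟩
  | succ n ih =>
    obtain ⟨m, hm, hlm, hn⟩ := ih
    obtain ⟨u, v, rfl⟩ := hm.exists_eq_concat
    obtain ⟨w, hw⟩ := hstep u v hm
    refine ⟨_, hm.concat hw, hlm.trans (List.prefix_append _ _), ?_⟩
    rw [List.length_append]
    exact Nat.succ_le_succ hn

end FiniteRun

theorem exists_eq_initialSegment_of_monotone {s : ℕ → List α}
    (hs : ∀ m n, m ≤ n → s m <+: s n) (hlen : ∀ n, ∃ m, n ≤ (s m).length) :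
    ∃ π : ℕ → α, ∀ m, s m = initialSegment π (s m).length := by
  choose k hk using hlen
  refine ⟨fun n => (s (k (n + 1)))[n]'(hk (n + 1)), fun m => List.ext_getElem (by simp) ?_⟩
  intro n hn _
  simp only [initialSegment, List.getElem_ofFn]
  rcases le_total m (k (n + 1)) with h | h
  · exact (hs _ _ h).getElem hn
  · exact ((hs _ _ h).getElem (hk (n + 1))).symm

/-- The Rasiowa–Sikorski lemma for the poset of finite runs ordered by extension. -/
theorem exists_run_frequently_mem {step : List α → α → α → Prop} {a : α} {ι : Type*} [Countable ι]
    (hstep : ∀ u v, FiniteRun step a (u ++ [v]) → ∃ w, step u v w) (D : ι → Set (List α))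
    (hD : ∀ i l, FiniteRun step a l → ∃ m, FiniteRun step a m ∧ l <+: m ∧ m ∈ D i) :
    ∃ π : ℕ → α, π 0 = a ∧ (∀ i, step (initialSegment π i) (π i) (π (i + 1))) ∧
      ∀ i, ∃ᶠ n in Filter.atTop, initialSegment π n ∈ D i := by
  let _ : Preorder {l // FiniteRun step a l} :=
    { le := fun l m => l.1 <+: m.1
      le_refl := fun l => List.prefix_refl l.1
      le_trans := fun _ _ _ => List.IsPrefix.trans }
  have hcofinal (k : Option ι × ℕ) :
      IsCofinal {l : {l // FiniteRun step a l} | k.2 ≤ l.1.length ∧ ∀ i ∈ k.1, l.1 ∈ D i} := by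
    rintro ⟨l, hl⟩
    obtain ⟨m, hm, hlm, hlen⟩ := hl.exists_length_ge hstep k.2
    rcases k with ⟨_ | i, n⟩
    · exact ⟨⟨m, hm⟩, ⟨hlen, by simp⟩, hlm⟩
    · obtain ⟨m', hm', hmm', hmD⟩ := hD i m hm
      exact ⟨⟨m', hm'⟩, ⟨hlen.trans hmm'.length_le, by simpa using hmD⟩, hlm.trans hmm'⟩
  have := Encodable.ofCountable (Option ι × ℕ)
  let 𝒟 (k : Option ι × ℕ) : Order.Cofinal {l // FiniteRun step a l} := ⟨_, hcofinal k⟩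
  let s := Order.sequenceOfCofinals ⟨[a], .singleton⟩ 𝒟
  have hs (k) : s (Encodable.encode k + 1) ∈ 𝒟 k := Order.sequenceOfCofinals.encode_mem _ 𝒟 k
  obtain ⟨π, hπ⟩ := exists_eq_initialSegment_of_monotone (s := fun n => (s n).1)
    (Order.sequenceOfCofinals.monotone _ 𝒟) fun n => ⟨_, (hs (none, n)).1⟩
  have hrun (n : ℕ) : FiniteRun step a (initialSegment π (n + 1)) := by
    refine (s (Encodable.encode ((none : Option ι), n + 1) + 1)).2.of_prefix
      (List.ne_nil_of_length_eq_add_one (length_initialSegment π _)) ?_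
    rw [hπ]
    exact initialSegment_prefix π (hs (none, n + 1)).1
  refine ⟨π, ?_, fun i => ?_, fun i => Filter.frequently_atTop.2 fun n => ?_⟩
  · simpa [initialSegment_succ] using (hrun 0).head?_eq
  · refine FiniteRun.step_of_concat (a := a) ?_
    rw [← initialSegment_succ, ← initialSegment_succ]
    exact hrun (i + 1)
  · obtain ⟨hlen, hmem⟩ := hs (some i, n)
    exact ⟨_, hlen, hπ _ ▸ hmem i rfl⟩

end FiniteRuns

open Filter

namespace LiveGameGraph

variable {V : Type*} {Gm : LiveGameGraph V}

section Plays

theorem notMem_V0_iff {v : V} : v ∉ Gm.V0 ↔ v ∈ Gm.V1 := by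
  have hcover : v ∈ Gm.V0 ∪ Gm.V1 := Gm.cover ▸ Set.mem_univ v
  have hdisj : v ∉ Gm.V0 ∩ Gm.V1 := Gm.disj ▸ Set.notMem_empty v
  exact ⟨hcover.resolve_left, fun h1 h0 => hdisj ⟨h0, h1⟩⟩

/-- The moves available when Player 0 always answers with `σ`. -/
def Move (Gm : LiveGameGraph V) (σ : V → V) (v w : V) : Prop :=
  Gm.E v w ∧ (v ∈ Gm.V0 → w = σ v)

theorem exists_move {σ : V → V} {v : V} (hσ : v ∈ Gm.V0 → Gm.E v (σ v)) :
    ∃ w, Gm.Move σ v w := by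
  by_cases hv : v ∈ Gm.V0
  · exact ⟨σ v, hσ hv, fun _ => rfl⟩
  · obtain ⟨w, hw⟩ := Gm.succ_nonempty v
    exact ⟨w, hw, fun h => absurd h hv⟩

theorem move_of_mem_V1 {σ : V → V} {v w : V} (hv : v ∈ Gm.V1) (hE : Gm.E v w) : Gm.Move σ v w :=
  ⟨hE, fun h => absurd h (notMem_V0_iff.2 hv)⟩

theorem Move.congr {σ τ : V → V} {v w : V} (h : Gm.Move σ v w) (hv : σ v = τ v) :
    Gm.Move τ v w :=
  ⟨h.1, fun h0 => (h.2 h0).trans hv⟩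

theorem mem_cpre_of_forall_move {σ : V → V} {v : V} {S : Set V} (hσ : v ∈ Gm.V0 → Gm.E v (σ v))
    (hS : ∀ w, Gm.Move σ v w → w ∈ S) : v ∈ Gm.cpre S := by
  by_cases hv : v ∈ Gm.V0
  · exact .inl ⟨hv, σ v, hσ hv, hS _ ⟨hσ hv, fun _ => rfl⟩⟩
  · have hv1 := notMem_V0_iff.1 hv
    exact .inr ⟨hv1, fun w hw => hS w (move_of_mem_V1 hv1 hw)⟩

/-- `π` is an infinite path on which Player 0 plays according to `ρ`. -/
def Follows (Gm : LiveGameGraph V) (ρ : List V → V → V) (π : ℕ → V) : Prop :=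
  ∀ i, Gm.Move (ρ (initialSegment π i)) (π i) (π (i + 1))

theorem winsFrom_iff {φ : (ℕ → V) → Prop} {ρ : List V → V → V} {v : V} :
    Gm.WinsFrom φ ρ v ↔
      Gm.Strategy0 ρ ∧ ∀ π, π 0 = v → Gm.Follows ρ π → Gm.StronglyFair π → φ π := by
  classical
  refine and_congr_right fun hρ => ⟨fun h π h0 hπ => ?_, fun h ρ₁ hρ₁ π hπ => ?_⟩
  · choose s hs using Gm.succ_nonempty
    let ρ₁ (l : List V) (v : V) : V :=
      if Gm.E v (π (l.length + 1)) then π (l.length + 1) else s v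
    have hρ₁ : Gm.Strategy1 ρ₁ := fun l v _ => by
      dsimp only [ρ₁]
      split_ifs with hE
      exacts [hE, hs v]
    exact h ρ₁ hρ₁ π ⟨h0, fun i => ⟨(hπ i).2, fun _ => by simp [ρ₁, (hπ i).1]⟩⟩
  · refine h π hπ.1 fun i => ⟨?_, (hπ.2 i).1⟩
    by_cases hi : π i ∈ Gm.V0
    · rw [(hπ.2 i).1 hi]
      exact hρ _ _ hi
    · rw [(hπ.2 i).2 (notMem_V0_iff.1 hi)]
      exact hρ₁ _ _ (notMem_V0_iff.1 hi)

theorem WinsFrom.mono {φ ψ : (ℕ → V) → Prop} {ρ : List V → V → V} {v : V}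
    (h : Gm.WinsFrom φ ρ v) (hφψ : ∀ π, φ π → ψ π) : Gm.WinsFrom ψ ρ v :=
  ⟨h.1, fun ρ₁ hρ₁ π hπ hfair => hφψ π (h.2 ρ₁ hρ₁ π hπ hfair)⟩

theorem stronglyFair_iff {π : ℕ → V} :
    Gm.StronglyFair π ↔ ∀ v w, Gm.El v w → (∃ᶠ i in atTop, π i = v) →
      ∃ᶠ i in atTop, π i = v ∧ π (i + 1) = w := by
  simp only [StronglyFair, ← Nat.frequently_atTop_iff_infinite]

theorem frequently_shift_iff {p : ℕ → Prop} (n : ℕ) :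
    (∃ᶠ i in atTop, p (n + i)) ↔ ∃ᶠ i in atTop, p i := by
  rw [← frequently_map (m := fun i => n + i)]
  simp only [Nat.add_comm n, map_add_atTop_eq_nat]

theorem eventually_shift_iff {p : ℕ → Prop} (n : ℕ) :
    (∀ᶠ i in atTop, p (n + i)) ↔ ∀ᶠ i in atTop, p i := by
  rw [← eventually_map (m := fun i => n + i)]
  simp only [Nat.add_comm n, map_add_atTop_eq_nat]

theorem stronglyFair_shift_iff {π : ℕ → V} (n : ℕ) :
    Gm.StronglyFair (fun i => π (n + i)) ↔ Gm.StronglyFair π := by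
  simp only [stronglyFair_iff]
  exact forall₃_congr fun v w _ => imp_congr (frequently_shift_iff (p := fun i => π i = v) n)
    (frequently_shift_iff (p := fun i => π i = v ∧ π (i + 1) = w) n)

/-- The strategy that remains of `ρ` once the word `u` has been played. -/
def residual (u : List V) (ρ : List V → V → V) : List V → V → V :=
  fun h => ρ (u ++ h)

theorem residual_residual (u u' : List V) (ρ : List V → V → V) :
    residual u' (residual u ρ) = residual (u ++ u') ρ :=
  funext fun h => congrArg ρ (List.append_assoc u u' h).symm

theorem residual_apply_nil (u : List V) (ρ : List V → V → V) : residual u ρ [] = ρ u :=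
  congrArg ρ u.append_nil

theorem WinsFrom.residual_of_move {φ ψ : (ℕ → V) → Prop} {ρ : List V → V → V} {v w : V}
    (h : Gm.WinsFrom φ ρ v) (hvw : Gm.Move (ρ []) v w)
    (hφψ : ∀ π, π 0 = v → φ π → ψ fun i => π (1 + i)) : Gm.WinsFrom ψ (residual [v] ρ) w := by
  rw [winsFrom_iff] at h ⊢
  refine ⟨fun u => h.1 ([v] ++ u), fun π hπw hπ hfair => ?_⟩
  let π' : ℕ → V := fun i => i.casesOn v π
  have htail : (fun i => π' (1 + i)) = π := funext fun i => by rw [Nat.add_comm]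
  have hfollows : Gm.Follows ρ π' := by
    rintro (_ | i)
    · simpa [π', hπw] using hvw
    · simpa [initialSegment, List.ofFn_succ, π', residual] using hπ i
  rw [← htail] at hfair ⊢
  exact hφψ π' rfl (h.2 π' rfl hfollows ((stronglyFair_shift_iff 1).1 hfair))

end Plays

section FairPlays

theorem stronglyFair_of_frequently {π : ℕ → V}
    (h : ∀ v w, Gm.El v w → ∃ᶠ n in atTop,
      (∃ u, initialSegment π n = u ++ [v] ++ [w]) ∨ ∀ m ≥ n, π m ≠ v) :
    Gm.StronglyFair π := by
  refine stronglyFair_iff.2 fun v w hvw hv => frequently_atTop.2 fun N => ?_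
  obtain ⟨n, hn, ⟨u, hu⟩ | hnever⟩ := frequently_atTop.1 (h v w hvw) (N + 2)
  · obtain ⟨_, rfl, hu', rfl⟩ := exists_of_initialSegment_eq_concat hu
    obtain ⟨n, rfl, -, rfl⟩ := exists_of_initialSegment_eq_concat hu'
    exact ⟨n, Nat.le_of_add_le_add_right hn, rfl, rfl⟩
  · obtain ⟨m, hm, hmv⟩ := frequently_atTop.1 hv n
    exact absurd hmv (hnever m hm)

theorem exists_fair_run [Countable V] {ι : Type*} [Countable ι]
    {step : List V → V → V → Prop} {a : V}
    (hstep : ∀ u v, FiniteRun step a (u ++ [v]) → ∃ w, step u v w)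
    (hlive : ∀ u v w, FiniteRun step a (u ++ [v]) → Gm.El v w → step u v w) (R : ι → Set V)
    (hR : ∀ i l, FiniteRun step a l →
      ∃ u, ∃ v ∈ R i, FiniteRun step a (u ++ [v]) ∧ l <+: u ++ [v]) :
    ∃ π : ℕ → V, π 0 = a ∧ (∀ i, step (initialSegment π i) (π i) (π (i + 1))) ∧
      Gm.StronglyFair π ∧ ∀ i, ∃ᶠ n in atTop, π n ∈ R i := by
  let visit (i : ι) : Set (List V) := {l | ∃ u, ∃ v ∈ R i, l = u ++ [v]}
  let takeEdge (e : {e : V × V // Gm.El e.1 e.2}) : Set (List V) :=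
    {l | (∃ u, l = u ++ [e.1.1] ++ [e.1.2]) ∨
      ∀ u, FiniteRun step a (u ++ [e.1.1]) → ¬ l <+: u ++ [e.1.1]}
  obtain ⟨π, h0, hπ, hD⟩ := exists_run_frequently_mem hstep (Sum.elim visit takeEdge) <| by
    rintro (i | ⟨⟨v, w⟩, hvw⟩) l hl
    · obtain ⟨u, v, hv, hu, hlu⟩ := hR i l hl
      exact ⟨_, hu, hlu, u, v, hv, rfl⟩
    · by_cases h : ∃ u, FiniteRun step a (u ++ [v]) ∧ l <+: u ++ [v]
      · obtain ⟨u, hu, hlu⟩ := h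
        exact ⟨_, hu.concat (hlive u v w hu hvw), hlu.trans (List.prefix_append _ _),
          .inl ⟨u, rfl⟩⟩
      · exact ⟨l, hl, List.prefix_refl l, .inr fun u hu hlu => h ⟨u, hu, hlu⟩⟩
  have hrun (n : ℕ) : FiniteRun step a (initialSegment π (n + 1)) :=
    h0 ▸ FiniteRun.of_initialSegment hπ n
  refine ⟨π, h0, hπ, stronglyFair_of_frequently fun v w hvw => ?_,
    fun i => frequently_atTop.2 fun N => ?_⟩
  · refine (hD (.inr ⟨(v, w), hvw⟩)).mono fun n => Or.imp_right fun hnever m hm hmv => ?_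
    have hsucc : initialSegment π (m + 1) = initialSegment π m ++ [v] :=
      hmv ▸ initialSegment_succ π m
    exact hnever _ (hsucc ▸ hrun m) (hsucc ▸ initialSegment_prefix π (hm.trans m.le_succ))
  · obtain ⟨n, hn, u, v, hv, hu⟩ := frequently_atTop.1 (hD (.inl i)) (N + 1)
    obtain ⟨n, rfl, -, rfl⟩ := exists_of_initialSegment_eq_concat hu
    exact ⟨n, Nat.le_of_succ_le_succ hn, hv⟩

theorem Strategy0.exists_fair_play [Countable V] {ρ : List V → V → V} (hρ : Gm.Strategy0 ρ)
    (v : V) : ∃ π, π 0 = v ∧ Gm.Follows ρ π ∧ Gm.StronglyFair π := by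
  obtain ⟨π, h0, hπ, hfair, -⟩ := exists_fair_run (Gm := Gm) (a := v)
    (step := fun u v w => Gm.Move (ρ u) v w) (fun u v _ => exists_move (hρ u v))
    (fun _ v w _ h => move_of_mem_V1 (Gm.live_sub v w h).1 (Gm.live_sub v w h).2)
    (fun _ : Empty => ∅) nofun
  exact ⟨π, h0, hπ, hfair⟩

end FairPlays

section RabinFixpoint

theorem cpre_mono : Monotone Gm.cpre := fun _ _ h =>
  Set.union_subset_union (fun _ ⟨hv, w, hw, hwS⟩ => ⟨hv, w, hw, h hwS⟩)
    fun _ ⟨hv, hS⟩ => ⟨hv, fun w hw => h (hS w hw)⟩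

theorem apre_mono {S S' T T' : Set V} (hS : S ⊆ S') (hT : T ⊆ T') :
    Gm.apre S T ⊆ Gm.apre S' T' :=
  Set.union_subset_union (cpre_mono hT) <| Set.inter_subset_inter
    (fun _ ⟨w, hw, hwT⟩ => ⟨w, hw, hT hwT⟩) fun _ ⟨hv, h⟩ => ⟨hv, fun w hw => hS (h w hw)⟩

theorem apre_subset_cpre {S T : Set V} (h : T ⊆ S) : Gm.apre S T ⊆ Gm.cpre S :=
  Set.union_subset (cpre_mono h) fun _ hv => .inr hv.2

/-- The union of `acc` and the term `C = Q ∩ ((G ∩ Cpre Y) ∪ Apre (Y, X))` of the Rabin fixpoint,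
where `Q` is the set that avoids all the `R`-components chosen so far. -/
def addTerm (Gm : LiveGameGraph V) (acc Q G Y X : Set V) : Set V :=
  acc ∪ (Q ∩ ((G ∩ Gm.cpre Y) ∪ Gm.apre Y X))

/-- The stage `νY. μX. …` of the Rabin fixpoint for a pair whose `G`-component is `G`: `Q` already
avoids the `R`-component of that pair, and the `n` pairs of `avail` remain to be nested inside. -/
def rabinLevel (Gm : LiveGameGraph V) (Gp Rp : ℕ → Set V) (n : ℕ) (avail : Finset ℕ)
    (Q acc G : Set V) : Set V :=
  gfpSet fun Y => lfpSet fun X => Gm.rabinAux Gp Rp n avail Q (Gm.addTerm acc Q G Y X)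

variable {Gp Rp : ℕ → Set V} {n : ℕ} {avail : Finset ℕ} {Q acc G : Set V}

theorem rabinZ_eq_rabinLevel (k : ℕ) :
    Gm.rabinZ Gp Rp k = Gm.rabinLevel Gp Rp k (Finset.Icc 1 k) Set.univ ∅ ∅ := by
  simp only [rabinZ, rabinLevel, addTerm, Set.empty_union, Set.compl_empty]

theorem rabinAux_succ :
    Gm.rabinAux Gp Rp (n + 1) avail Q acc =
      ⋃ p ∈ avail, Gm.rabinLevel Gp Rp n (avail.erase p) (Q ∩ (Rp p)ᶜ) acc (Gp p) :=
  rfl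

theorem addTerm_mono {acc' Y Y' X X' : Set V} (hacc : acc ⊆ acc') (hY : Y ⊆ Y') (hX : X ⊆ X') :
    Gm.addTerm acc Q G Y X ⊆ Gm.addTerm acc' Q G Y' X' :=
  Set.union_subset_union hacc <| Set.inter_subset_inter_right _ <|
    Set.union_subset_union (Set.inter_subset_inter_right _ (cpre_mono hY)) (apre_mono hY hX)

theorem rabinAux_mono : Monotone (Gm.rabinAux Gp Rp n avail Q) := by
  intro acc acc' hacc
  induction n generalizing avail Q acc acc' with
  | zero => exact hacc
  | succ n ih =>
    exact Set.iUnion₂_mono fun p _ => gfpSet_mono fun Y => lfpSet_mono fun X =>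
      ih (addTerm_mono hacc subset_rfl subset_rfl)

theorem monotone_rabinAux_addTerm (Y : Set V) :
    Monotone fun X => Gm.rabinAux Gp Rp n avail Q (Gm.addTerm acc Q G Y X) :=
  fun _ _ hX => rabinAux_mono (addTerm_mono subset_rfl subset_rfl hX)

theorem monotone_lfpSet_rabinAux_addTerm :
    Monotone fun Y => lfpSet fun X =>
      Gm.rabinAux Gp Rp n avail Q (Gm.addTerm acc Q G Y X) :=
  fun _ _ hY => lfpSet_mono fun _ => rabinAux_mono (addTerm_mono subset_rfl hY subset_rfl)

theorem rabinLevel_eq_lfpSet :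
    Gm.rabinLevel Gp Rp n avail Q acc G = lfpSet fun X =>
      Gm.rabinAux Gp Rp n avail Q
        (Gm.addTerm acc Q G (Gm.rabinLevel Gp Rp n avail Q acc G) X) :=
  (map_gfpSet monotone_lfpSet_rabinAux_addTerm).symm

theorem rabinLevel_eq_rabinAux :
    Gm.rabinLevel Gp Rp n avail Q acc G = Gm.rabinAux Gp Rp n avail Q
      (Gm.addTerm acc Q G (Gm.rabinLevel Gp Rp n avail Q acc G)
        (Gm.rabinLevel Gp Rp n avail Q acc G)) := by
  have h := map_lfpSet (monotone_rabinAux_addTerm (Gm := Gm) (Gp := Gp) (Rp := Rp) (n := n)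
    (avail := avail) (Q := Q) (acc := acc) (G := G) (Gm.rabinLevel Gp Rp n avail Q acc G))
  rw [← rabinLevel_eq_lfpSet] at h
  exact h.symm

theorem subset_rabinAux (h : avail.card = n) : acc ⊆ Gm.rabinAux Gp Rp n avail Q acc := by
  induction n generalizing avail Q acc with
  | zero => exact subset_rfl
  | succ n ih =>
    obtain ⟨p, hp⟩ : avail.Nonempty := Finset.card_pos.1 (h ▸ n.succ_pos)
    rw [rabinAux_succ]
    refine Set.subset_biUnion_of_mem (u := fun p => Gm.rabinLevel Gp Rp n (avail.erase p) _ acc _)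
      hp |>.trans' ?_
    rw [rabinLevel_eq_rabinAux]
    exact Set.subset_union_left.trans (ih (by rw [Finset.card_erase_of_mem hp, h]; rfl))

theorem rabinAux_subset :
    Gm.rabinAux Gp Rp n avail Q acc ⊆ acc ∪ (Q ∩ Gm.cpre (Gm.rabinAux Gp Rp n avail Q acc)) := by
  induction n generalizing avail Q acc with
  | zero => exact Set.subset_union_left
  | succ n ih =>
    rw [rabinAux_succ]
    refine Set.iUnion₂_subset fun p hp => ?_
    set Y := Gm.rabinLevel Gp Rp n (avail.erase p) (Q ∩ (Rp p)ᶜ) acc (Gp p) with hY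
    have hYsub : Y ⊆ acc ∪ ((Q ∩ (Rp p)ᶜ) ∩ Gm.cpre Y) := by
      have h := ih (avail := avail.erase p) (Q := Q ∩ (Rp p)ᶜ)
        (acc := Gm.addTerm acc (Q ∩ (Rp p)ᶜ) (Gp p) Y Y)
      rw [hY, ← rabinLevel_eq_rabinAux, ← hY, addTerm, Set.union_assoc,
        ← Set.inter_union_distrib_left] at h
      refine h.trans (Set.union_subset_union_right _ (Set.inter_subset_inter_right _ ?_))
      exact Set.union_subset (Set.union_subset Set.inter_subset_right
        (apre_subset_cpre subset_rfl)) subset_rfl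
    exact hYsub.trans <| Set.union_subset_union_right _ <| Set.inter_subset_inter
      Set.inter_subset_left <| cpre_mono <| Set.subset_biUnion_of_mem
        (u := fun p => Gm.rabinLevel Gp Rp n (avail.erase p) (Q ∩ (Rp p)ᶜ) acc (Gp p)) hp

theorem addTerm_eq_self_of_eq_rabinAux {X Y : Set V} (h : avail.card = n)
    (hX : X = Gm.rabinAux Gp Rp n avail Q (Gm.addTerm acc Q G Y X)) :
    Gm.addTerm acc Q G Y X = X := by
  apply Set.Subset.antisymm
  · exact (subset_rabinAux h).trans hX.superset
  · have hsub := rabinAux_subset (Gm := Gm) (Gp := Gp) (Rp := Rp) (n := n) (avail := avail)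
      (Q := Q) (acc := Gm.addTerm acc Q G Y X)
    rw [← hX] at hsub
    refine hsub.trans (Set.union_subset subset_rfl ?_)
    exact fun v hv => .inr ⟨hv.1, .inr (.inl hv.2)⟩

end RabinFixpoint

section RabinCondition

/-- The Rabin condition for the pairs with index in `s`. -/
def Rabin (Gp Rp : ℕ → Set V) (s : Finset ℕ) (π : ℕ → V) : Prop :=
  ∃ j ∈ s, (∀ᶠ i in atTop, π i ∉ Rp j) ∧ ∃ᶠ i in atTop, π i ∈ Gp j

theorem rabin_shift_iff {Gp Rp : ℕ → Set V} {s : Finset ℕ} {π : ℕ → V} (n : ℕ) :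
    Rabin Gp Rp s (fun i => π (n + i)) ↔ Rabin Gp Rp s π :=
  exists_congr fun j => and_congr_right fun _ =>
    and_congr (eventually_shift_iff (p := fun i => π i ∉ Rp j) n)
      (frequently_shift_iff (p := fun i => π i ∈ Gp j) n)

end RabinCondition

section Completeness

/-- What Player 0 achieves on `rabinLevel Gp Rp n avail Q acc G`: to reach `acc` through `Q`, or to
stay in `Q` forever and visit `G` infinitely often or satisfy the Rabin condition for `avail`. -/
def Objective (Gp Rp : ℕ → Set V) (avail : Finset ℕ) (Q acc G : Set V) (π : ℕ → V) : Prop :=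
  (∃ i, π i ∈ acc ∧ ∀ j < i, π j ∈ Q) ∨
    (∀ i, π i ∈ Q) ∧ ((∃ᶠ i in atTop, π i ∈ G) ∨ Rabin Gp Rp avail π)

variable {Gp Rp : ℕ → Set V} {n : ℕ} {avail : Finset ℕ} {Q acc G : Set V}

theorem Objective.tail {π : ℕ → V} (h : Objective Gp Rp avail Q acc G π) (h0 : π 0 ∉ acc) :
    Objective Gp Rp avail Q acc G fun i => π (1 + i) := by
  rcases h with ⟨i, hi, hQ⟩ | ⟨hQ, h⟩
  · obtain ⟨i, rfl⟩ := Nat.exists_eq_add_one_of_ne_zero (by rintro rfl; exact h0 hi : i ≠ 0)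
    rw [Nat.add_comm] at hi hQ
    exact .inl ⟨i, hi, fun j hj => hQ _ (Nat.add_lt_add_left hj 1)⟩
  · exact .inr ⟨fun i => hQ _, h.imp (frequently_shift_iff (p := fun i => π i ∈ G) 1).2
      (rabin_shift_iff 1).2⟩

theorem Objective.head_mem {π : ℕ → V} (h : Objective Gp Rp avail Q acc G π) (h0 : π 0 ∉ acc) :
    π 0 ∈ Q := by
  rcases h with ⟨i, hi, hQ⟩ | ⟨hQ, -⟩
  · exact hQ 0 (Nat.pos_of_ne_zero (by rintro rfl; exact h0 hi))
  · exact hQ 0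

theorem WinsFrom.residual_objective {ρ : List V → V → V} {v w : V}
    (h : Gm.WinsFrom (Objective Gp Rp avail Q acc G) ρ v) (hv : v ∉ acc)
    (hvw : Gm.Move (ρ []) v w) :
    Gm.WinsFrom (Objective Gp Rp avail Q acc G) (residual [v] ρ) w :=
  h.residual_of_move hvw fun _ h0 hπ => hπ.tail (h0 ▸ hv)

/-- The region from which Player 0 can achieve the `Objective`. -/
abbrev objectiveRegion (Gm : LiveGameGraph V) (Gp Rp : ℕ → Set V) (avail : Finset ℕ)
    (Q acc G : Set V) : Set V :=
  Gm.WinningRegion (Objective Gp Rp avail Q acc G)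

theorem objectiveRegion_subset [Countable V] :
    Gm.objectiveRegion Gp Rp avail Q acc G ⊆
      acc ∪ (Q ∩ Gm.cpre (Gm.objectiveRegion Gp Rp avail Q acc G)) := by
  rintro v ⟨ρ, hρ⟩
  by_cases hv : v ∈ acc
  · exact .inl hv
  obtain ⟨π, rfl, hπ, hfair⟩ := hρ.1.exists_fair_play v
  refine .inr ⟨((winsFrom_iff.1 hρ).2 π rfl hπ hfair).head_mem hv, ?_⟩
  exact mem_cpre_of_forall_move (hρ.1 [] _) fun w hw => ⟨_, hρ.residual_objective hv hw⟩

theorem notMem_of_mem_objectiveRegion_diff [Countable V] {X : Set V} {v : V}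
    (hX : Gm.addTerm acc Q G (Gm.objectiveRegion Gp Rp avail Q acc G) X ⊆ X)
    (hv : v ∈ Gm.objectiveRegion Gp Rp avail Q acc G \ X) :
    v ∈ Q ∧ v ∉ acc ∧ v ∉ G ∧ v ∉ Gm.apre (Gm.objectiveRegion Gp Rp avail Q acc G) X := by
  have hadd : v ∉ Gm.addTerm acc Q G _ X := fun h => hv.2 (hX h)
  have hacc : v ∉ acc := fun h => hadd (.inl h)
  obtain ⟨hQ, hcpre⟩ := (objectiveRegion_subset hv.1).resolve_left hacc
  exact ⟨hQ, hacc, fun h => hadd (.inr ⟨hQ, .inl ⟨h, hcpre⟩⟩),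
    fun h => hadd (.inr ⟨hQ, .inr h⟩)⟩

/-- The moves of the game in which Player 0 follows `ρ` and the play stays in `A`. -/
def stayStep (Gm : LiveGameGraph V) (ρ : List V → V → V) (A : Set V) (u : List V) (v w : V) :
    Prop :=
  Gm.Move (ρ u) v w ∧ w ∈ A

theorem winsFrom_residual_of_finiteRun {ρ : List V → V → V} {A : Set V} {v₀ : V}
    (hA : Disjoint A acc) (hv₀ : v₀ ∈ A)
    (hρ : Gm.WinsFrom (Objective Gp Rp avail Q acc G) ρ v₀) {u : List V} {v : V}
    (hu : FiniteRun (Gm.stayStep ρ A) v₀ (u ++ [v])) :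
    v ∈ A ∧ Gm.WinsFrom (Objective Gp Rp avail Q acc G) (residual u ρ) v := by
  generalize hl : u ++ [v] = l at hu
  induction hu generalizing u v with
  | singleton =>
    obtain ⟨rfl, rfl⟩ := List.append_singleton_inj (as := u) (bs := []).1 hl
    exact ⟨hv₀, hρ⟩
  | @concat u' v' w _ hstep ih =>
    obtain ⟨rfl, rfl⟩ := List.append_singleton_inj.1 hl
    obtain ⟨hv', hwin⟩ := ih rfl
    refine ⟨hstep.2, residual_residual u' [v'] ρ ▸ ?_⟩
    refine hwin.residual_objective (hA.notMem_of_mem_left hv') ?_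
    exact residual_apply_nil u' ρ ▸ hstep.1

theorem mem_objectiveRegion_of_finiteRun_of_move {ρ : List V → V → V} {A : Set V} {v₀ : V}
    (hA : Disjoint A acc) (hv₀ : v₀ ∈ A)
    (hρ : Gm.WinsFrom (Objective Gp Rp avail Q acc G) ρ v₀) {u : List V} {v w : V}
    (hu : FiniteRun (Gm.stayStep ρ A) v₀ (u ++ [v])) (hvw : Gm.Move (ρ u) v w) :
    w ∈ Gm.objectiveRegion Gp Rp avail Q acc G := by
  obtain ⟨hv, hwin⟩ := winsFrom_residual_of_finiteRun hA hv₀ hρ hu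
  refine ⟨_, hwin.residual_objective (hA.notMem_of_mem_left hv) ?_⟩
  rwa [residual_apply_nil]

theorem finiteRun_append_of_follows_residual {ρ : List V → V → V} {X : Set V} {v₀ : V}
    (hX : acc ⊆ X) (hv₀ : v₀ ∈ Gm.objectiveRegion Gp Rp avail Q acc G \ X)
    (hρ : Gm.WinsFrom (Objective Gp Rp avail Q acc G) ρ v₀) {u : List V} {π : ℕ → V}
    (hu : FiniteRun (Gm.stayStep ρ (Gm.objectiveRegion Gp Rp avail Q acc G \ X)) v₀ (u ++ [π 0]))
    (hπ : Gm.Follows (residual u ρ) π) {n : ℕ} (hn : ∀ i ≤ n, π i ∉ X) :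
    FiniteRun (Gm.stayStep ρ (Gm.objectiveRegion Gp Rp avail Q acc G \ X)) v₀
      (u ++ initialSegment π n ++ [π n]) := by
  have hA : Disjoint (Gm.objectiveRegion Gp Rp avail Q acc G \ X) acc :=
    Set.disjoint_sdiff_left.mono_right hX
  induction n with
  | zero => simpa using hu
  | succ n ih =>
    have hrun := ih fun i hi => hn i (hi.trans n.le_succ)
    have hmem := mem_objectiveRegion_of_finiteRun_of_move hA hv₀ hρ hrun (hπ n)
    rw [append_initialSegment_succ]
    exact hrun.concat ⟨hπ n, hmem, hn _ le_rfl⟩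

theorem Objective.erase {X : Set V} {q : ℕ} {π : ℕ → V}
    (h : Objective Gp Rp avail Q acc G π)
    (hX : ∀ n, (∀ i ≤ n, π i ∉ X) → π n ∈ Q ∧ π n ∉ Rp q ∧ π n ∉ acc ∧ π n ∉ G) :
    Objective Gp Rp (avail.erase q) (Q ∩ (Rp q)ᶜ) X (Gp q) π := by
  classical
  by_cases hreach : ∃ n, π n ∈ X
  · refine .inl ⟨Nat.find hreach, Nat.find_spec hreach, fun n hn => ?_⟩
    obtain ⟨hQ, hR, -⟩ := hX n fun i hi => Nat.find_min hreach (hi.trans_lt hn)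
    exact ⟨hQ, hR⟩
  · have hstay (n : ℕ) := hX n fun i _ hi => hreach ⟨i, hi⟩
    refine .inr ⟨fun n => ⟨(hstay n).1, (hstay n).2.1⟩, ?_⟩
    rcases h with ⟨n, hn, -⟩ | ⟨-, hG | ⟨j, hj, hRj, hGj⟩⟩
    · exact absurd hn (hstay n).2.2.1
    · obtain ⟨n, hn⟩ := hG.exists
      exact absurd hn (hstay n).2.2.2
    · rcases eq_or_ne j q with rfl | hjq
      exacts [.inl hGj, .inr ⟨j, Finset.mem_erase.2 ⟨hjq, hj⟩, hRj, hGj⟩]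

/-- If no extension of `l` outside of `X` visited `Rp q`, then following `ρ` after `l` would win the
objective in which the pair `q` has been chosen, although its region is contained in `X`. -/
theorem exists_finiteRun_visit [Countable V] {ρ : List V → V → V} {X : Set V} {q : ℕ} {v₀ : V}
    (hX : Gm.addTerm acc Q G (Gm.objectiveRegion Gp Rp avail Q acc G) X ⊆ X)
    (hq : Gm.objectiveRegion Gp Rp (avail.erase q) (Q ∩ (Rp q)ᶜ) X (Gp q) ⊆ X)
    (hv₀ : v₀ ∈ Gm.objectiveRegion Gp Rp avail Q acc G \ X)
    (hρ : Gm.WinsFrom (Objective Gp Rp avail Q acc G) ρ v₀) {l : List V}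
    (hl : FiniteRun (Gm.stayStep ρ (Gm.objectiveRegion Gp Rp avail Q acc G \ X)) v₀ l) :
    ∃ u, ∃ v ∈ Rp q, FiniteRun (Gm.stayStep ρ (Gm.objectiveRegion Gp Rp avail Q acc G \ X)) v₀
      (u ++ [v]) ∧ l <+: u ++ [v] := by
  have haccX : acc ⊆ X := Set.subset_union_left.trans hX
  have hA : Disjoint (Gm.objectiveRegion Gp Rp avail Q acc G \ X) acc :=
    Set.disjoint_sdiff_left.mono_right haccX
  obtain ⟨u, v, rfl⟩ := hl.exists_eq_concat
  obtain ⟨hv, hwin⟩ := winsFrom_residual_of_finiteRun hA hv₀ hρ hl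
  by_contra! hvisit
  refine hv.2 (hq ⟨residual u ρ, winsFrom_iff.2 ⟨hwin.1, fun π h0 hπ hfair => ?_⟩⟩)
  subst h0
  refine ((winsFrom_iff.1 hwin).2 π rfl hπ hfair).erase fun n hn => ?_
  have hrun := finiteRun_append_of_follows_residual haccX hv₀ hρ hl hπ hn
  have hmem := (winsFrom_residual_of_finiteRun hA hv₀ hρ hrun).1
  obtain ⟨hQ, hacc, hG, -⟩ := notMem_of_mem_objectiveRegion_diff hX hmem
  refine ⟨hQ, fun hR => hvisit _ _ hR hrun ?_, hacc, hG⟩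
  rw [← append_initialSegment_succ, List.prefix_append_right_inj]
  exact initialSegment_prefix π (Nat.le_add_left 1 n)

theorem objectiveRegion_subset_of_addTerm_subset [Countable V] {X : Set V}
    (hX : Gm.addTerm acc Q G (Gm.objectiveRegion Gp Rp avail Q acc G) X ⊆ X)
    (hq : ∀ q ∈ avail, Gm.objectiveRegion Gp Rp (avail.erase q) (Q ∩ (Rp q)ᶜ) X (Gp q) ⊆ X) :
    Gm.objectiveRegion Gp Rp avail Q acc G ⊆ X := by
  set W := Gm.objectiveRegion Gp Rp avail Q acc G
  intro v₀ hv₀W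
  by_contra hv₀X
  have hv₀ : v₀ ∈ W \ X := ⟨hv₀W, hv₀X⟩
  obtain ⟨ρ, hρ⟩ := hv₀W
  have hstay {v : V} (hv : v ∈ W \ X) := notMem_of_mem_objectiveRegion_diff hX hv
  have hA : Disjoint (W \ X) acc := Set.disjoint_left.2 fun v hv => (hstay hv).2.1
  have hrun {u : List V} {v : V} (hu : FiniteRun (Gm.stayStep ρ (W \ X)) v₀ (u ++ [v])) :
      v ∈ W \ X := (winsFrom_residual_of_finiteRun hA hv₀ hρ hu).1
  have hmove {u : List V} {v w : V} (hu : FiniteRun (Gm.stayStep ρ (W \ X)) v₀ (u ++ [v]))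
      (hvw : Gm.Move (ρ u) v w) : w ∈ W :=
    mem_objectiveRegion_of_finiteRun_of_move hA hv₀ hρ hu hvw
  have hstep (u v) (hu : FiniteRun (Gm.stayStep ρ (W \ X)) v₀ (u ++ [v])) :
      ∃ w, Gm.stayStep ρ (W \ X) u v w := by
    by_contra! hall
    refine (hstay (hrun hu)).2.2.2 (.inl (mem_cpre_of_forall_move (hρ.1 u v) fun w hw => ?_))
    exact by_contra fun hwX => hall w ⟨hw, hmove hu hw, hwX⟩
  have hlive (u v w) (hu : FiniteRun (Gm.stayStep ρ (W \ X)) v₀ (u ++ [v])) (hvw : Gm.El v w) :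
      Gm.stayStep ρ (W \ X) u v w := by
    have hsucc {w' : V} (hE : Gm.E v w') := move_of_mem_V1 (σ := ρ u) (Gm.live_sub v w hvw).1 hE
    refine ⟨hsucc (Gm.live_sub v w hvw).2, hmove hu (hsucc (Gm.live_sub v w hvw).2), fun hwX => ?_⟩
    exact (hstay (hrun hu)).2.2.2 (.inr ⟨⟨w, hvw, hwX⟩, (Gm.live_sub v w hvw).1,
      fun w' hE => hmove hu (hsucc hE)⟩)
  obtain ⟨π, rfl, hπ, hfair, hR⟩ := exists_fair_run hstep hlive (fun q : avail => Rp q)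
    fun q l => exists_finiteRun_visit hX (hq q q.2) hv₀ hρ
  have hπA : ∀ n, π n ∈ W \ X := Nat.rec hv₀ fun n _ => (hπ n).2
  obtain ⟨n, hn, -⟩ | ⟨-, hG | ⟨q, hq, hRq, -⟩⟩ :=
    (winsFrom_iff.1 hρ).2 π rfl (fun n => (hπ n).1) hfair
  · exact (hstay (hπA n)).2.1 hn
  · obtain ⟨n, hn⟩ := hG.exists
    exact (hstay (hπA n)).2.2.1 hn
  · exact hR ⟨q, hq⟩ hRq

theorem objectiveRegion_subset_rabinLevel [Countable V] (h : avail.card = n) :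
    Gm.objectiveRegion Gp Rp avail Q acc G ⊆ Gm.rabinLevel Gp Rp n avail Q acc G := by
  induction n using Nat.strong_induction_on generalizing avail Q acc G with
  | h n ih =>
  set W := Gm.objectiveRegion Gp Rp avail Q acc G
  refine subset_gfpSet ?_
  set X := lfpSet fun X => Gm.rabinAux Gp Rp n avail Q (Gm.addTerm acc Q G W X)
  have hX : X = Gm.rabinAux Gp Rp n avail Q (Gm.addTerm acc Q G W X) :=
    (map_lfpSet (monotone_rabinAux_addTerm W)).symm
  have hadd : Gm.addTerm acc Q G W X = X := addTerm_eq_self_of_eq_rabinAux h hX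
  refine objectiveRegion_subset_of_addTerm_subset hadd.subset fun q hq => ?_
  rw [hadd] at hX
  obtain ⟨n, rfl⟩ := Nat.exists_eq_add_one_of_ne_zero (h ▸ Finset.card_ne_zero_of_mem hq)
  rw [rabinAux_succ] at hX
  refine (ih n n.lt_succ_self (by rw [Finset.card_erase_of_mem hq, h]; rfl)).trans ?_
  exact (Set.subset_biUnion_of_mem (u := fun q =>
    Gm.rabinLevel Gp Rp n (avail.erase q) (Q ∩ (Rp q)ᶜ) X (Gp q)) hq).trans hX.superset

end Completeness

section Soundness

/-- Playing the positional strategy `σ`, Player 0 keeps to `B` and, until `acc` is reached, also to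
`Q`; a fair play that never reaches `acc` satisfies `Φ`. -/
structure Secures (Gm : LiveGameGraph V) (σ : V → V) (B acc Q : Set V) (Φ : (ℕ → V) → Prop) :
    Prop where
  subset : B \ acc ⊆ Q
  legal : ∀ v ∈ B \ acc, v ∈ Gm.V0 → Gm.E v (σ v)
  move_mem : ∀ v ∈ B \ acc, ∀ w, Gm.Move σ v w → w ∈ B
  limit : ∀ π, Gm.StronglyFair π → (∀ i, Gm.Move σ (π i) (π (i + 1))) → (∀ i, π i ∈ B \ acc) → Φ π

variable {Q acc G : Set V}

/-- Playing the strategy of the least region that contains the current vertex, the index of that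
region can only decrease. -/
theorem exists_secures_iUnion {ι : Type*} [LinearOrder ι] [WellFoundedLT ι] {σ : ι → V → V}
    {B Q : ι → Set V} {Φ : ι → (ℕ → V) → Prop}
    (h : ∀ q, Gm.Secures (σ q) (B q) acc (Q q) (Φ q)) :
    ∃ τ, Gm.Secures τ (⋃ q, B q) acc (⋃ q, Q q)
      fun π => ∃ q N, (∀ i, π (N + i) ∈ Q q) ∧ Φ q fun i => π (N + i) := by
  classical
  have hleast (v : V) (hv : v ∈ ⋃ q, B q) : ∃ q, v ∈ B q ∧ ∀ p, v ∈ B p → q ≤ p := by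
    obtain ⟨q, hq, hmin⟩ := WellFounded.has_min wellFounded_lt {q | v ∈ B q} (Set.mem_iUnion.1 hv)
    exact ⟨q, hq, fun p hp => not_lt.1 (hmin p hp)⟩
  choose idx hmem hle using hleast
  let τ (v : V) : V := if hv : v ∈ ⋃ q, B q then σ (idx v hv) v else v
  have hτ (v : V) (hv : v ∈ ⋃ q, B q) : τ v = σ (idx v hv) v := dif_pos hv
  have hmove {v w : V} (hv : v ∈ (⋃ q, B q) \ acc) (hvw : Gm.Move τ v w) : w ∈ B (idx v hv.1) :=
    (h _).move_mem v ⟨hmem v hv.1, hv.2⟩ w (hvw.congr (hτ v hv.1))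
  refine ⟨τ, fun v hv => ?_, fun v hv h0 => ?_, fun v hv w hvw => ?_, fun π hfair hπ hB => ?_⟩
  · exact Set.mem_iUnion_of_mem _ ((h _).subset ⟨hmem v hv.1, hv.2⟩)
  · exact hτ v hv.1 ▸ (h _).legal v ⟨hmem v hv.1, hv.2⟩ h0
  · exact Set.mem_iUnion_of_mem _ (hmove hv hvw)
  · have hanti : Antitone fun i => idx (π i) (hB i).1 :=
      antitone_nat_of_succ_le fun i => hle _ _ _ (hmove (hB i) (hπ i))
    obtain ⟨N, hN⟩ := WellFoundedLT.antitone_chain_condition hanti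
    have hconst (i : ℕ) : idx (π (N + i)) (hB (N + i)).1 = idx (π N) (hB N).1 :=
      (hN _ (N.le_add_right i)).symm
    have hstay (i : ℕ) : π (N + i) ∈ B (idx (π N) (hB N).1) \ acc :=
      ⟨hconst i ▸ hmem _ (hB (N + i)).1, (hB (N + i)).2⟩
    refine ⟨_, N, fun i => (h _).subset (hstay i), (h _).limit _ ?_ (fun i => ?_) hstay⟩
    · exact (stronglyFair_shift_iff N).2 hfair
    · exact (hπ (N + i)).congr (hconst i ▸ hτ _ (hB (N + i)).1)

theorem eventually_recurrent [Finite V] (π : ℕ → V) :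
    ∀ᶠ i in atTop, ∃ᶠ j in atTop, π j = π i := by
  have h (v : V) : ∀ᶠ i in atTop, π i = v → ∃ᶠ j in atTop, π j = v := by
    by_cases hv : ∃ᶠ j in atTop, π j = v
    · exact .of_forall fun _ _ => hv
    · exact (not_frequently.1 hv).mono fun i hi hiv => absurd hiv hi
  exact (eventually_all.2 h).mono fun i hi => hi _ rfl

theorem exists_recurrent_mem [Finite V] {π : ℕ → V} {S : Set V} (h : ∃ᶠ i in atTop, π i ∈ S) :
    ∃ v ∈ S, ∃ᶠ i in atTop, π i = v := by
  obtain ⟨i, hi, hrec⟩ := (h.and_eventually (eventually_recurrent π)).exists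
  exact ⟨π i, hi, hrec⟩

theorem exists_recurrent_mem_of_apre [Finite V] {π : ℕ → V} {S T : Set V} {v : V}
    (hfair : Gm.StronglyFair π) (hE : ∀ i, Gm.E (π i) (π (i + 1))) (hv : ∃ᶠ i in atTop, π i = v)
    (hvT : v ∈ Gm.apre S T) (h0 : v ∈ Gm.V0 → ∀ i, π i = v → π (i + 1) ∈ T) :
    ∃ w ∈ T, ∃ᶠ i in atTop, π i = w := by
  rcases hvT with hcpre | ⟨⟨w, hvw, hwT⟩, -⟩
  · have hsucc (i : ℕ) (hi : π i = v) : π (i + 1) ∈ T := by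
      rcases hcpre with hv0 | hv1
      exacts [h0 hv0.1 i hi, hv1.2 _ (hi ▸ hE i)]
    exact exists_recurrent_mem ((tendsto_add_atTop_nat 1).frequently (hv.mono hsucc))
  · have htaken := (stronglyFair_iff.1 hfair v w hvw hv).mono fun _ => And.right
    exact ⟨w, hwT, (tendsto_add_atTop_nat 1).frequently htaken⟩

theorem exists_shift_rank_eq [Finite V] {π : ℕ → V} {rank : V → ℕ} {S : Set V}
    (hdesc : ∀ v ∈ S, (∃ᶠ i in atTop, π i = v) → ∃ w, (∃ᶠ i in atTop, π i = w) ∧ rank w < rank v)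
    (hstep : ∀ i, π i ∉ S → rank (π (i + 1)) ≤ rank (π i)) :
    ∃ m N, ∀ i, rank (π (N + i)) = m ∧ π (N + i) ∉ S := by
  obtain ⟨N₀, hN₀⟩ := eventually_atTop.1 (eventually_recurrent π)
  obtain ⟨v, hv, hmin⟩ := WellFounded.has_min (measure rank).wf {v | ∃ᶠ i in atTop, π i = v}
    ⟨π N₀, hN₀ N₀ le_rfl⟩
  obtain ⟨N, hN, rfl⟩ := frequently_atTop.1 hv N₀
  have hnotMem (i : ℕ) (hi : rank (π (N + i)) = rank (π N)) : π (N + i) ∉ S := fun hS => by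
    obtain ⟨w, hw, hlt⟩ := hdesc _ hS (hN₀ _ (Nat.le_add_right_of_le hN))
    exact hmin w hw (hlt.trans_eq hi)
  have hrank (i : ℕ) : rank (π (N + i)) = rank (π N) := by
    induction i with
    | zero => rfl
    | succ i ih =>
      apply le_antisymm (ih ▸ hstep (N + i) (hnotMem i ih))
      exact not_lt.1 (hmin _ (hN₀ _ (Nat.le_add_right_of_le hN)))
  exact ⟨_, N, fun i => ⟨hrank i, hnotMem i (hrank i)⟩⟩

theorem exists_progress_move {U X : Set V} {v : V} (hXU : X ⊆ U)
    (hv : v ∈ (G ∩ Gm.cpre U) ∪ Gm.apre U X) :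
    ∃ d, (v ∈ Gm.V0 → Gm.E v d ∧ (v ∈ Gm.apre U X → d ∈ X)) ∧
      ∀ w, Gm.Move (fun _ => d) v w → w ∈ U := by
  have hcpre : v ∈ Gm.cpre U := hv.elim And.right fun h => apre_subset_cpre hXU h
  by_cases h0 : v ∈ Gm.V0
  · have h1 (T : Set V) : v ∉ Gm.pre1 T := fun h => notMem_V0_iff.2 h.1 h0
    by_cases hapre : v ∈ Gm.apre U X
    · obtain ⟨-, d, hd, hdX⟩ := (hapre.resolve_right fun h => h1 U h.2).resolve_right (h1 X)
      exact ⟨d, fun _ => ⟨hd, fun _ => hdX⟩, fun w hw => hw.2 h0 ▸ hXU hdX⟩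
    · obtain ⟨-, d, hd, hdU⟩ := hcpre.resolve_right (h1 U)
      exact ⟨d, fun _ => ⟨hd, fun h => absurd h hapre⟩, fun w hw => hw.2 h0 ▸ hdU⟩
  · have hsucc := (hcpre.resolve_left fun h => h0 h.1).2
    exact ⟨v, fun h => absurd h h0, fun w hw => hsucc w hw.1⟩

/-- The least `n` with `v ∈ a (n + 1)`, which ranks the vertices of `⋃ n, a n` for an iteration `a`
that starts from `a 0 = ∅`; the junk value outside of `⋃ n, a n` is `0`. -/
noncomputable def firstStage (a : ℕ → Set V) (v : V) : ℕ :=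
  sInf {n | v ∈ a (n + 1)}

theorem firstStage_le {a : ℕ → Set V} {v : V} {n : ℕ} (hv : v ∈ a (n + 1)) : firstStage a v ≤ n :=
  Nat.sInf_le hv

theorem firstStage_lt {a : ℕ → Set V} (ha : a 0 = ∅) {v : V} {n : ℕ} (hv : v ∈ a n) :
    firstStage a v < n := by
  rcases n with _ | n
  exacts [absurd (ha ▸ hv) (Set.notMem_empty v), Nat.lt_succ_of_le (firstStage_le hv)]

theorem mem_firstStage_add_one {a : ℕ → Set V} (ha : a 0 = ∅) {v : V} (hv : v ∈ ⋃ n, a n) :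
    v ∈ a (firstStage a v + 1) := by
  obtain ⟨_ | n, hn⟩ := Set.mem_iUnion.1 hv
  exacts [absurd (ha ▸ hn) (Set.notMem_empty v), Nat.sInf_mem (s := {n | v ∈ a (n + 1)}) ⟨n, hn⟩]

/-- The vertices at which Player 0 visits `G` or can make progress towards an earlier stage of
`a`. -/
def progressSet (Gm : LiveGameGraph V) (G : Set V) (a : ℕ → Set V) : Set V :=
  {v | v ∈ (G ∩ Gm.cpre (⋃ n, a n)) ∪ Gm.apre (⋃ n, a n) (a (firstStage a v))}

theorem exists_shift_firstStage_eq [Finite V] {a : ℕ → Set V} (ha : a 0 = ∅) {τ : V → V} {π : ℕ → V}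
    (hfair : Gm.StronglyFair π) (hπ : ∀ i, Gm.Move τ (π i) (π (i + 1)))
    (hG : ∀ᶠ i in atTop, π i ∉ G)
    (hτ : ∀ v ∈ Gm.V0, v ∈ Gm.apre (⋃ n, a n) (a (firstStage a v)) → τ v ∈ a (firstStage a v))
    (hstep : ∀ i, π i ∉ Gm.progressSet G a → π (i + 1) ∈ a (firstStage a (π i) + 1)) :
    ∃ m N, ∀ i, firstStage a (π (N + i)) = m ∧ π (N + i) ∉ Gm.progressSet G a := by
  refine exists_shift_rank_eq (fun v hv hrec => ?_) fun i hi => firstStage_le (hstep i hi)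
  have hvG : v ∉ G := by
    obtain ⟨i, rfl, hi⟩ := (hrec.and_eventually hG).exists
    exact hi
  have hapre : v ∈ Gm.apre (⋃ n, a n) (a (firstStage a v)) := hv.resolve_left fun h => hvG h.1
  obtain ⟨w, hw, hwrec⟩ := exists_recurrent_mem_of_apre hfair (fun i => (hπ i).1) hrec hapre
    fun h0 i hi => (hπ i).2 (hi ▸ h0) ▸ hi ▸ hτ v h0 hapre
  exact ⟨w, hwrec, firstStage_lt ha hw⟩

/-- In `⋃ n, a n`, Player 0 plays to lower the rank `firstStage a` whenever she can. A play that
visits `G` finitely often finally follows a single strategy `σ n`, because at its recurrent vertices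
of minimal rank the rank cannot be lowered. -/
theorem exists_secures_iUnion_of_stages [Finite V] {a : ℕ → Set V} {σ : ℕ → V → V}
    {Φ : (ℕ → V) → Prop} (ha : a 0 = ∅)
    (h : ∀ n, Gm.Secures (σ n) (a (n + 1)) (Gm.addTerm acc Q G (⋃ m, a m) (a n)) Q Φ)
    (hΦ : ∀ π N, Φ (fun i => π (N + i)) → Φ π) :
    ∃ τ, Gm.Secures τ (⋃ n, a n) acc Q fun π => (∃ᶠ i in atTop, π i ∈ G) ∨ Φ π := by
  classical
  choose d hd hdU using fun v (hv : v ∈ Gm.progressSet G a) =>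
    exists_progress_move (Set.subset_iUnion a (firstStage a v)) hv
  let τ (v : V) : V := if hv : v ∈ Gm.progressSet G a then d v hv else σ (firstStage a v) v
  have hτd {v : V} (hv : v ∈ Gm.progressSet G a) : τ v = d v hv := dif_pos hv
  have hτσ {v : V} (hv : v ∉ Gm.progressSet G a) : τ v = σ (firstStage a v) v := dif_neg hv
  have hstage {v : V} (hv : v ∈ (⋃ n, a n) \ acc) (hprog : v ∉ Gm.progressSet G a) :
      v ∈ a (firstStage a v + 1) \ Gm.addTerm acc Q G (⋃ n, a n) (a (firstStage a v)) :=
    ⟨mem_firstStage_add_one ha hv.1, fun h => hprog (h.resolve_left hv.2).2⟩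
  have hmove {v w : V} (hv : v ∈ (⋃ n, a n) \ acc) (hprog : v ∉ Gm.progressSet G a)
      (hvw : Gm.Move τ v w) : w ∈ a (firstStage a v + 1) :=
    (h _).move_mem v (hstage hv hprog) w (hvw.congr (hτσ hprog))
  refine ⟨τ, fun v hv => ?_, fun v hv h0 => ?_, fun v hv w hvw => ?_, fun π hfair hπ hB => ?_⟩
  · by_contra hQ
    exact hQ ((h _).subset ⟨mem_firstStage_add_one ha hv.1, fun h => hQ (h.resolve_left hv.2).1⟩)
  · by_cases hprog : v ∈ Gm.progressSet G a
    exacts [hτd hprog ▸ (hd v hprog h0).1, hτσ hprog ▸ (h _).legal v (hstage hv hprog) h0]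
  · by_cases hprog : v ∈ Gm.progressSet G a
    exacts [hdU v hprog w (hvw.congr (hτd hprog)), Set.mem_iUnion_of_mem _ (hmove hv hprog hvw)]
  · refine or_iff_not_imp_left.2 fun hG => ?_
    obtain ⟨m, N, hN⟩ := exists_shift_firstStage_eq ha hfair hπ (not_frequently.1 hG)
      (fun v h0 hv => hτd (.inr hv) ▸ (hd v (.inr hv) h0).2 hv)
      fun i hi => hmove (hB i) hi (hπ i)
    refine hΦ π N ((h m).limit _ ((stronglyFair_shift_iff N).2 hfair) (fun i => ?_) fun i => ?_)
    · exact (hπ (N + i)).congr ((hN i).1 ▸ hτσ (hN i).2)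
    · exact (hN i).1 ▸ hstage (hB (N + i)) (hN i).2

theorem Secures.exists_positional_winsFrom {σ : V → V} {B : Set V} {Φ : (ℕ → V) → Prop}
    (h : Gm.Secures σ B ∅ Q Φ) :
    ∃ τ : V → V, (∀ v ∈ Gm.V0, Gm.E v (τ v)) ∧ ∀ v ∈ B, Gm.WinsFrom Φ (fun _ => τ) v := by
  classical
  choose s hs using Gm.succ_nonempty
  let τ : V → V := B.piecewise σ s
  have hB {v : V} (hv : v ∈ B) : v ∈ B \ ∅ := ⟨hv, Set.notMem_empty v⟩
  have hτB {v : V} (hv : v ∈ B) : τ v = σ v := B.piecewise_eq_of_mem σ s hv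
  have hτBc {v : V} (hv : v ∉ B) : τ v = s v := B.piecewise_eq_of_notMem σ s hv
  have hτ : ∀ v ∈ Gm.V0, Gm.E v (τ v) := fun v h0 => by
    by_cases hv : v ∈ B
    exacts [hτB hv ▸ h.legal v (hB hv) h0, hτBc hv ▸ hs v]
  refine ⟨τ, hτ, fun v hv => winsFrom_iff.2 ⟨fun _ => hτ, fun π h0 hπ hfair => ?_⟩⟩
  have hmove {i : ℕ} (hi : π i ∈ B) : Gm.Move σ (π i) (π (i + 1)) :=
    (hπ i).congr (hτB hi)
  have hstay (i : ℕ) : π i ∈ B := by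
    induction i with
    | zero => exact h0 ▸ hv
    | succ i ih => exact h.move_mem _ (hB ih) _ (hmove ih)
  exact h.limit π hfair (fun i => hmove (hstay i)) fun i => hB (hstay i)

variable {Gp Rp : ℕ → Set V} {n : ℕ} {avail : Finset ℕ}

theorem exists_secures_rabinLevel_of_rabinAux [Finite V]
    (h : ∀ acc, ∃ σ, Gm.Secures σ (Gm.rabinAux Gp Rp n avail Q acc) acc Q (Rabin Gp Rp avail)) :
    ∃ σ, Gm.Secures σ (Gm.rabinLevel Gp Rp n avail Q acc G) acc Q
      fun π => (∃ᶠ i in atTop, π i ∈ G) ∨ Rabin Gp Rp avail π := by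
  set Y := Gm.rabinLevel Gp Rp n avail Q acc G
  set f : Set V → Set V := fun X => Gm.rabinAux Gp Rp n avail Q (Gm.addTerm acc Q G Y X)
  have hY : Y = ⋃ n, f^[n] ∅ :=
    rabinLevel_eq_lfpSet.trans (lfpSet_eq_iUnion_iterate (monotone_rabinAux_addTerm Y))
  choose σ hσ using h
  rw [hY]
  refine exists_secures_iUnion_of_stages (σ := fun n => σ (Gm.addTerm acc Q G Y (f^[n] ∅))) rfl
    (fun n => ?_) fun π N => (rabin_shift_iff N).1
  rw [Function.iterate_succ_apply', ← hY]
  exact hσ _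

theorem exists_secures_rabinAux [Finite V] :
    ∃ σ, Gm.Secures σ (Gm.rabinAux Gp Rp n avail Q acc) acc Q (Rabin Gp Rp avail) := by
  induction n generalizing avail Q acc with
  | zero =>
    have hempty (v : V) : v ∉ Gm.rabinAux Gp Rp 0 avail Q acc \ acc := fun hv => hv.2 hv.1
    exact ⟨id, fun v hv => absurd hv (hempty v), fun v hv => absurd hv (hempty v),
      fun v hv => absurd hv (hempty v), fun π _ _ hB => absurd (hB 0) (hempty _)⟩
  | succ n ih =>
    choose σ hσ using fun q : avail => exists_secures_rabinLevel_of_rabinAux (acc := acc)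
      (G := Gp q) fun acc' => ih (avail := avail.erase q) (Q := Q ∩ (Rp q)ᶜ) (acc := acc')
    obtain ⟨τ, hτ⟩ := exists_secures_iUnion hσ
    rw [rabinAux_succ, ← Set.iUnion_subtype (· ∈ avail) fun q =>
      Gm.rabinLevel Gp Rp n (avail.erase q) (Q ∩ (Rp q)ᶜ) acc (Gp q)]
    refine ⟨τ, fun v hv => ?_, hτ.legal, hτ.move_mem, fun π hfair hπ hB => ?_⟩
    · obtain ⟨q, hq⟩ := Set.mem_iUnion.1 (hτ.subset hv)
      exact hq.1
    · obtain ⟨q, N, hQ, hwin⟩ := hτ.limit π hfair hπ hB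
      refine (rabin_shift_iff N).1 ?_
      rcases hwin with hG | ⟨j, hj, hwin⟩
      · exact ⟨q, q.2, .of_forall fun i => (hQ i).2, hG⟩
      · exact ⟨j, Finset.mem_of_mem_erase hj, hwin⟩

theorem exists_positional_winsFrom_rabin [Finite V] (k : ℕ) :
    ∃ σ : V → V, (∀ v ∈ Gm.V0, Gm.E v (σ v)) ∧ ∀ v ∈ Gm.rabinZ Gp Rp k,
      Gm.WinsFrom (Rabin Gp Rp (Finset.Icc 1 k)) (fun _ => σ) v := by
  obtain ⟨σ, hσ⟩ := exists_secures_rabinLevel_of_rabinAux (Gm := Gm) (Gp := Gp) (Rp := Rp)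
    (avail := Finset.Icc 1 k) (Q := Set.univ) (acc := ∅) (G := ∅)
    fun _ => exists_secures_rabinAux (n := k)
  obtain ⟨τ, hτ, hwin⟩ := hσ.exists_positional_winsFrom
  refine ⟨τ, hτ, fun v hv => (hwin v (rabinZ_eq_rabinLevel k ▸ hv)).mono fun π hπ => ?_⟩
  exact hπ.resolve_left fun hG => hG.exists.elim fun _ => Set.notMem_empty _

end Soundness

theorem winningRegion_rabin_subset_rabinZ [Countable V] {Gp Rp : ℕ → Set V} (k : ℕ) :
    Gm.WinningRegion (Rabin Gp Rp (Finset.Icc 1 k)) ⊆ Gm.rabinZ Gp Rp k := by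
  rw [rabinZ_eq_rabinLevel]
  refine Set.Subset.trans ?_ (objectiveRegion_subset_rabinLevel (Nat.card_Icc 1 k))
  rintro v ⟨ρ, hρ⟩
  exact ⟨ρ, hρ.mono fun π hπ => .inr ⟨fun _ => Set.mem_univ _, .inr hπ⟩⟩

end LiveGameGraph

/-- the permutation-based Rabin fixpoint equals the winning region
of Player 0 in the fair adversarial Rabin game, and a memoryless winning
Player-0 strategy exists on it. -/
theorem fair_adversarial_rabin {V : Type*} [Fintype V]
    (Gm : LiveGameGraph V) (k : ℕ) (Gp Rp : ℕ → Set V) (Zstar : Set V)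
    (hZ : Zstar = Gm.rabinZ Gp Rp k) :
    Zstar = Gm.WinningRegion
        (fun π => ∃ j ∈ Finset.Icc 1 k,
          (∃ N, ∀ i ≥ N, π i ∉ Rp j) ∧ (∀ N, ∃ i ≥ N, π i ∈ Gp j)) ∧
    ∃ σ : V → V, (∀ v ∈ Gm.V0, Gm.E v (σ v)) ∧
      ∀ v0 ∈ Zstar,
        Gm.WinsFrom
          (fun π => ∃ j ∈ Finset.Icc 1 k,
            (∃ N, ∀ i ≥ N, π i ∉ Rp j) ∧ (∀ N, ∃ i ≥ N, π i ∈ Gp j))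
          (fun _ v => σ v) v0 := by
  have hRabin : LiveGameGraph.Rabin Gp Rp (Finset.Icc 1 k) = fun π => ∃ j ∈ Finset.Icc 1 k,
      (∃ N, ∀ i ≥ N, π i ∉ Rp j) ∧ (∀ N, ∃ i ≥ N, π i ∈ Gp j) := by
    ext π
    simp only [LiveGameGraph.Rabin, eventually_atTop, frequently_atTop]
  rw [← hRabin, hZ]
  obtain ⟨σ, hσ, hwin⟩ :=
    LiveGameGraph.exists_positional_winsFrom_rabin (Gm := Gm) (Gp := Gp) (Rp := Rp) k
  refine ⟨?_, σ, hσ, hwin⟩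
  apply Set.Subset.antisymm
  · exact fun v hv => ⟨_, hwin v hv⟩
  · exact LiveGameGraph.winningRegion_rabin_subset_rabinZ k
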